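/- Let n ≥ 2 and let G_1, ..., G_n be finite groups. If each G_i is a solvable SST-group and gcd(|G_i|, |G_j|) = 1 for all 1 ≤ i, j ≤ n with i ≠ j, then the direct product G_1 × G_2 × ⋯ × G_n is a solvable SST-group. -/

import Mathlib

open scoped Pointwise

section Defs

variable {G : Type*} [Group G]

/-- `K` is an SS-permutable supplement of `H` in `G`: `HK = G` and `H` permutes with
every Sylow subgroup of `K`. -/
def IsSSSupplement (H K : Subgroup G) : Prop :=
  (H : Set G) * (K : Set G) = Set.univ ∧
    ∀ (p : ℕ) [Fact p.Prime] (P : Sylow p K),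
      (H : Set G) * ((P.toSubgroup.map K.subtype : Subgroup G) : Set G) =
        ((P.toSubgroup.map K.subtype : Subgroup G) : Set G) * (H : Set G)

/-- `H` is SS-permutable in `G`: `H` has a supplement `K` such that `H` permutes with
every Sylow subgroup of `K`. -/
def IsSSPermutable (H : Subgroup G) : Prop :=
  ∃ K : Subgroup G, IsSSSupplement H K

/-- `H` is NSS-permutable in `G`: `H` has a normal supplement `K` such that `H` permutes
with every Sylow subgroup of `K`. -/
def IsNSSPermutable (H : Subgroup G) : Prop :=
  ∃ K : Subgroup G, K.Normal ∧ IsSSSupplement H K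

/-- `H` is S-permutable in `G`: it permutes with every Sylow subgroup of `G`. -/
def IsSPermutable (H : Subgroup G) : Prop :=
  ∀ (p : ℕ) [Fact p.Prime] (P : Sylow p G),
    (H : Set G) * ((P : Subgroup G) : Set G) = ((P : Subgroup G) : Set G) * (H : Set G)

/-- `H` is semipermutable in `G`: `HX = XH` for every subgroup `X` with `gcd(|H|,|X|) = 1`. -/
def IsSemipermutable (H : Subgroup G) : Prop :=
  ∀ X : Subgroup G, Nat.Coprime (Nat.card H) (Nat.card X) →
    (H : Set G) * (X : Set G) = (X : Set G) * (H : Set G)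

/-- `H` is S-semipermutable in `G`: `HQ = QH` for every Sylow `q`-subgroup `Q` of `G`
with `q` a prime not dividing `|H|`. -/
def IsSSemipermutable (H : Subgroup G) : Prop :=
  ∀ (q : ℕ) [Fact q.Prime], ¬ q ∣ Nat.card H → ∀ Q : Sylow q G,
    (H : Set G) * ((Q : Subgroup G) : Set G) = ((Q : Subgroup G) : Set G) * (H : Set G)

end Defs

/-- `G` is an SST-group: SS-permutability is a transitive relation. -/
def IsSSTGroup (G : Type*) [Group G] : Prop :=
  ∀ H K : Subgroup G, H ≤ K → IsSSPermutable (H.subgroupOf K) → IsSSPermutable K →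
    IsSSPermutable H

/-- `G` is an NSST-group: NSS-permutability is a transitive relation. -/
def IsNSSTGroup (G : Type*) [Group G] : Prop :=
  ∀ H K : Subgroup G, H ≤ K → IsNSSPermutable (H.subgroupOf K) → IsNSSPermutable K →
    IsNSSPermutable H

/-- `G` is a PST-group: S-permutability is a transitive relation. -/
def IsPSTGroup (G : Type*) [Group G] : Prop :=
  ∀ H K : Subgroup G, H ≤ K → IsSPermutable (H.subgroupOf K) → IsSPermutable K →
    IsSPermutable H

/-- `G` is a BT-group: semipermutability is a transitive relation. -/
def IsBTGroup (G : Type*) [Group G] : Prop :=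
  ∀ H K : Subgroup G, H ≤ K → IsSemipermutable (H.subgroupOf K) → IsSemipermutable K →
    IsSemipermutable H

/-!
When the factors have pairwise coprime orders, the Chinese remainder theorem turns each component of
an element of the product into a power of that element, so every subgroup of the product is the
product of its projections. Products of subgroups, Sylow subgroups and SS-permutability can
therefore all be tested factor by factor.
-/

theorem isSolvable_pi {ι : Type*} [Finite ι] {G : ι → Type*} [∀ i, Group (G i)]
    (hG : ∀ i, Group.IsSolvable (G i)) : Group.IsSolvable (∀ i, G i) := by
  have := Fintype.ofFinite ι
  choose m hm using fun i => (hG i).solvable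
  refine ⟨⟨Finset.univ.sup m, (Subgroup.eq_bot_iff_forall _).2 fun x hx => funext fun i => ?_⟩⟩
  have hxi : x i ∈ derivedSeries (G i) (Finset.univ.sup m) :=
    map_derivedSeries_le_derivedSeries (Pi.evalMonoidHom G i) _
      (Subgroup.mem_map_of_mem (Pi.evalMonoidHom G i) hx)
  have hle : derivedSeries (G i) (Finset.univ.sup m) ≤ ⊥ :=
    hm i ▸ derivedSeries_antitone (G i) (Finset.le_sup (Finset.mem_univ i))
  exact Subgroup.mem_bot.1 (hle hxi)

theorem exists_pow_eq_mulSingle {ι : Type*} [Finite ι] [DecidableEq ι] {M : ι → Type*}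
    [∀ i, Monoid (M i)] (x : ∀ i, M i)
    (hx : Pairwise fun i j => Nat.Coprime (orderOf (x i)) (orderOf (x j))) (i : ι) :
    ∃ m : ℕ, x ^ m = Pi.mulSingle i (x i) := by
  have := Fintype.ofFinite ι
  have hcop : Nat.Coprime (orderOf (x i)) (∏ j ∈ Finset.univ.erase i, orderOf (x j)) :=
    Nat.Coprime.prod_right fun j hj => hx (Finset.ne_of_mem_erase hj).symm
  obtain ⟨m, hm_one, hm_zero⟩ := Nat.chineseRemainder hcop 1 0
  refine ⟨m, funext fun j => ?_⟩
  obtain rfl | hji := eq_or_ne j i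
  · rw [Pi.pow_apply, Pi.mulSingle_eq_same, pow_eq_pow_of_modEq hm_one (pow_orderOf_eq_one _),
      pow_one]
  · have hdvd : orderOf (x j) ∣ m :=
      (Finset.dvd_prod_of_mem _ (Finset.mem_erase.2 ⟨hji, Finset.mem_univ j⟩)).trans
        (Nat.modEq_zero_iff_dvd.1 hm_zero)
    rw [Pi.pow_apply, Pi.mulSingle_eq_of_ne hji, orderOf_dvd_iff_pow_eq_one.1 hdvd]

theorem univ_pi_mul_univ_pi {ι : Type*} {M : ι → Type*} [∀ i, Mul (M i)]
    (s t : ∀ i, Set (M i)) :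
    Set.univ.pi s * Set.univ.pi t = Set.univ.pi fun i => s i * t i := by
  ext g
  simp only [Set.mem_mul, Set.mem_univ_pi]
  constructor
  · rintro ⟨x, hx, y, hy, rfl⟩ i
    exact ⟨x i, hx i, y i, hy i, rfl⟩
  · intro hg
    choose x hx y hy hxy using hg
    exact ⟨x, hx, y, hy, funext hxy⟩

section Map

variable {G G' : Type*} [Group G] [Group G']

theorem map_subtype_map_subgroupMap (f : G →* G') (K : Subgroup G) (L : Subgroup K) :
    (L.map (f.subgroupMap K)).map (K.map f).subtype = (L.map K.subtype).map f := by
  rw [Subgroup.map_map, Subgroup.map_map]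
  rfl

theorem map_subgroupMap_subgroupOf (f : G →* G') {H K : Subgroup G} (hHK : H ≤ K) :
    (H.subgroupOf K).map (f.subgroupMap K) = (H.map f).subgroupOf (K.map f) := by
  apply Subgroup.map_injective (K.map f).subtype_injective
  rw [map_subtype_map_subgroupMap, Subgroup.map_subgroupOf_eq_of_le hHK,
    Subgroup.map_subgroupOf_eq_of_le (Subgroup.map_mono hHK)]

theorem IsSSSupplement.map {H K : Subgroup G} [Finite K] (hHK : IsSSSupplement H K) {f : G →* G'}
    (hf : Function.Surjective f) : IsSSSupplement (H.map f) (K.map f) := by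
  obtain ⟨hmul, hperm⟩ := hHK
  refine ⟨?_, fun p _ Q => ?_⟩
  · rw [Subgroup.coe_map, Subgroup.coe_map, ← Set.image_mul, hmul, Set.image_univ, hf.range_eq]
  · obtain ⟨P, rfl⟩ := Sylow.mapSurjective_surjective (f.subgroupMap_surjective K) p Q
    rw [Sylow.coe_mapSurjective, map_subtype_map_subgroupMap, Subgroup.coe_map f,
      Subgroup.coe_map f, ← Set.image_mul, ← Set.image_mul, hperm p P]

theorem IsSSPermutable.map [Finite G] {H : Subgroup G} (hH : IsSSPermutable H) {f : G →* G'}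
    (hf : Function.Surjective f) : IsSSPermutable (H.map f) :=
  let ⟨K, hHK⟩ := hH
  ⟨K.map f, hHK.map hf⟩

end Map

section Pi

variable {ι : Type*} {G : ι → Type*} [∀ i, Group (G i)]

theorem map_evalMonoidHom_pi (K : ∀ i, Subgroup (G i)) (i : ι) :
    (Subgroup.pi Set.univ K).map (Pi.evalMonoidHom G i) = K i :=
  SetLike.coe_injective <| Set.eval_image_univ_pi ⟨1, (Subgroup.pi Set.univ K).one_mem⟩

variable [Finite ι]

theorem pi_map_evalMonoidHom (hcop : Pairwise fun i j => (Nat.card (G i)).Coprime (Nat.card (G j)))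
    (H : Subgroup (∀ i, G i)) :
    Subgroup.pi Set.univ (fun i => H.map (Pi.evalMonoidHom G i)) = H := by
  classical
  refine le_antisymm (fun g hg => Subgroup.pi_mem_of_mulSingle_mem g fun i => ?_)
    fun g hg i _ => Subgroup.mem_map_of_mem (Pi.evalMonoidHom G i) hg
  obtain ⟨x, hxH, hxg : x i = g i⟩ := hg i (Set.mem_univ i)
  obtain ⟨m, hm⟩ := exists_pow_eq_mulSingle x
    (fun j k hjk => (hcop hjk).of_dvd (orderOf_dvd_natCard _) (orderOf_dvd_natCard _)) i
  rw [← hxg, ← hm]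
  exact H.pow_mem hxH m

theorem coe_mul_coe_eq_univ_pi
    (hcop : Pairwise fun i j => (Nat.card (G i)).Coprime (Nat.card (G j)))
    (H K : Subgroup (∀ i, G i)) :
    (H : Set (∀ i, G i)) * (K : Set (∀ i, G i)) =
      Set.univ.pi fun i => (H.map (Pi.evalMonoidHom G i) : Set (G i)) *
        (K.map (Pi.evalMonoidHom G i) : Set (G i)) := by
  rw [← univ_pi_mul_univ_pi, ← Subgroup.coe_pi, ← Subgroup.coe_pi, pi_map_evalMonoidHom hcop,
    pi_map_evalMonoidHom hcop]

variable [∀ i, Finite (G i)]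

theorem IsSSSupplement.of_map_evalMonoidHom
    (hcop : Pairwise fun i j => (Nat.card (G i)).Coprime (Nat.card (G j)))
    {H K : Subgroup (∀ i, G i)}
    (hHK : ∀ i, IsSSSupplement (H.map (Pi.evalMonoidHom G i)) (K.map (Pi.evalMonoidHom G i))) :
    IsSSSupplement H K := by
  refine ⟨?_, fun p _ P => ?_⟩
  · simp only [coe_mul_coe_eq_univ_pi hcop H K, (hHK _).1, Set.pi_univ]
  · rw [coe_mul_coe_eq_univ_pi hcop, coe_mul_coe_eq_univ_pi hcop]
    congr 1 with i : 1
    have hperm := (hHK i).2 p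
      (P.mapSurjective ((Pi.evalMonoidHom G i).subgroupMap_surjective K))
    rwa [Sylow.coe_mapSurjective, map_subtype_map_subgroupMap] at hperm

theorem IsSSPermutable.of_map_evalMonoidHom
    (hcop : Pairwise fun i j => (Nat.card (G i)).Coprime (Nat.card (G j)))
    {H : Subgroup (∀ i, G i)} (hH : ∀ i, IsSSPermutable (H.map (Pi.evalMonoidHom G i))) :
    IsSSPermutable H := by
  choose K hK using hH
  refine ⟨Subgroup.pi Set.univ K, .of_map_evalMonoidHom hcop fun i => ?_⟩
  rw [map_evalMonoidHom_pi]
  exact hK i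

theorem theoremH_general (hcop : Pairwise fun i j => (Nat.card (G i)).Coprime (Nat.card (G j)))
    (hG : ∀ i, IsSSTGroup (G i)) : IsSSTGroup (∀ i, G i) := by
  intro H K hHK hH hK
  refine IsSSPermutable.of_map_evalMonoidHom hcop fun i => ?_
  have hmap : IsSSPermutable
      ((H.map (Pi.evalMonoidHom G i)).subgroupOf (K.map (Pi.evalMonoidHom G i))) := by
    rw [← map_subgroupMap_subgroupOf _ hHK]
    exact hH.map ((Pi.evalMonoidHom G i).subgroupMap_surjective K)
  exact hG i _ _ (Subgroup.map_mono hHK) hmap (hK.map (Function.surjective_eval i))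

end Pi

/-- Theorem H. -/
theorem theoremH (n : ℕ) (hn : 2 ≤ n) (G : Fin n → Type*)
    [∀ i, Group (G i)] [∀ i, Finite (G i)]
    (h : ∀ i, IsSolvable (G i) ∧ IsSSTGroup (G i))
    (hcop : ∀ i j : Fin n, i ≠ j → Nat.Coprime (Nat.card (G i)) (Nat.card (G j))) :
    IsSolvable (∀ i, G i) ∧ IsSSTGroup (∀ i, G i) :=
  ⟨isSolvable_pi fun i => (h i).1, theoremH_general (fun i j => hcop i j) fun i => (h i).2⟩
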